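/- arXiv:1611.00516 — 5 statements merged into one kernel-verified Lean document; each statement's English description precedes it below -/
import Mathlib

section
/- Let μ₁, μ₂, μ₃, μ₄ be real numbers with μ₁ + μ₂ + μ₃ + μ₄ = 0. Then μ₁³ + μ₂³ + μ₃³ + μ₄³ ≤ (1/√3)·(μ₁² + μ₂² + μ₃² + μ₄²)^{3/2}. -/
/-!
Let `n` numbers with zero sum have sum of squares `S`, and write `S = n (n - 1) c ^ 2` with `0 ≤ c`.
Each number `x` satisfies `x ≤ (n - 1) c` (Samuelson's inequality), by Cauchy–Schwarz applied to the
other `n - 1` numbers, hence `(x - (n - 1) c) (x + c) ^ 2 ≤ 0`. Summing this cubic inequality gives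
the bound `(n - 2) c S` on the sum of cubes. The two roots are the values of the extremal
configuration: one number equal to `(n - 1) c` and all the others equal to `-c`.
-/

open Finset

section OrderedRing

variable {ι R : Type*} [CommRing R] [LinearOrder R] [IsStrictOrderedRing R]
  {s : Finset ι} {x : ι → R} {c : R} {i : ι}

theorem card_mul_sq_le_card_sub_one_mul_sum_sq (hx : ∑ j ∈ s, x j = 0) (hi : i ∈ s) :
    (#s : R) * x i ^ 2 ≤ (#s - 1) * ∑ j ∈ s, x j ^ 2 := by
  classical
  have hsum : x i + ∑ j ∈ s.erase i, x j = 0 := by rw [add_sum_erase s x hi, hx]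
  have hcard : (#(s.erase i) : R) = #s - 1 := by rw [cast_card_erase_of_mem hi]
  have hrest : x i ^ 2 ≤ (#s - 1) * ∑ j ∈ s.erase i, x j ^ 2 := by
    rw [eq_neg_of_add_eq_zero_left hsum, neg_sq, ← hcard]
    exact sq_sum_le_card_mul_sum_sq
  rw [← add_sum_erase s (fun j ↦ x j ^ 2) hi]
  linear_combination hrest

theorem le_card_sub_one_mul_of_sum_eq_zero (hc : 0 ≤ c) (hx : ∑ j ∈ s, x j = 0)
    (hxc : ∑ j ∈ s, x j ^ 2 = #s * (#s - 1) * c ^ 2) (hi : i ∈ s) : x i ≤ (#s - 1) * c := by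
  have hcard : 1 ≤ (#s : R) := mod_cast card_pos.2 ⟨i, hi⟩
  have hsq : x i ^ 2 ≤ ((#s - 1) * c) ^ 2 := by
    refine le_of_mul_le_mul_left ?_ (zero_lt_one.trans_le hcard)
    linear_combination card_mul_sq_le_card_sub_one_mul_sum_sq hx hi + (#s - 1) * hxc
  exact le_of_sq_le_sq hsq (mul_nonneg (sub_nonneg.2 hcard) hc)

theorem sum_pow_three_le_of_sum_eq_zero (hc : 0 ≤ c) (hx : ∑ i ∈ s, x i = 0)
    (hxc : ∑ i ∈ s, x i ^ 2 = #s * (#s - 1) * c ^ 2) :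
    ∑ i ∈ s, x i ^ 3 ≤ (#s - 2) * c * ∑ i ∈ s, x i ^ 2 := by
  have hcubic : ∑ i ∈ s, (x i - (#s - 1) * c) * (x i + c) ^ 2 ≤ 0 :=
    sum_nonpos fun i hi ↦ mul_nonpos_of_nonpos_of_nonneg
      (sub_nonpos.2 (le_card_sub_one_mul_of_sum_eq_zero hc hx hxc hi)) (sq_nonneg _)
  have hexpand : ∑ i ∈ s, (x i - (#s - 1) * c) * (x i + c) ^ 2 =
      ∑ i ∈ s, x i ^ 3 - (#s - 3) * c * ∑ i ∈ s, x i ^ 2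
        - (2 * #s - 3) * c ^ 2 * ∑ i ∈ s, x i - #s * (#s - 1) * c ^ 3 := by
    rw [mul_assoc (#s : R), ← nsmul_eq_mul, ← sum_const]
    simp only [mul_sum, ← sum_sub_distrib]
    exact sum_congr rfl fun i _ ↦ by ring
  linear_combination hcubic - hexpand + (2 * #s - 3) * c ^ 2 * hx - c * hxc

end OrderedRing

theorem stmt_2_general {ι : Type*} {s : Finset ι} {x : ι → ℝ} (hs : s.Nontrivial)
    (hx : ∑ i ∈ s, x i = 0) :
    ∑ i ∈ s, x i ^ 3 ≤
      (#s - 2) / √(#s * (#s - 1)) * (∑ i ∈ s, x i ^ 2) ^ ((3 : ℝ) / 2) := by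
  set S := ∑ i ∈ s, x i ^ 2
  have hS₀ : 0 ≤ S := sum_nonneg fun i _ ↦ sq_nonneg (x i)
  have hcard : 1 < (#s : ℝ) := mod_cast one_lt_card_iff_nontrivial.2 hs
  have hN : 0 < (#s : ℝ) * (#s - 1) := mul_pos (zero_lt_one.trans hcard) (sub_pos.2 hcard)
  have hscale₀ : 0 ≤ √S / √(#s * (#s - 1)) := div_nonneg (Real.sqrt_nonneg _) (Real.sqrt_nonneg _)
  have hscale : S = #s * (#s - 1) * (√S / √(#s * (#s - 1))) ^ 2 := by
    rw [div_pow, Real.sq_sqrt hS₀, Real.sq_sqrt hN.le, mul_div_cancel₀ _ hN.ne']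
  have hpow : S ^ ((3 : ℝ) / 2) = √S * S := by
    rw [Real.sqrt_eq_rpow, ← Real.rpow_add_one' (y := 1 / 2) hS₀ (by norm_num)]
    norm_num
  calc ∑ i ∈ s, x i ^ 3
      ≤ (#s - 2) * (√S / √(#s * (#s - 1))) * S :=
        sum_pow_three_le_of_sum_eq_zero hscale₀ hx hscale
    _ = (#s - 2) / √(#s * (#s - 1)) * S ^ ((3 : ℝ) / 2) := by rw [hpow]; ring

theorem stmt_2 (μ₁ μ₂ μ₃ μ₄ : ℝ) (hsum : μ₁ + μ₂ + μ₃ + μ₄ = 0) :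
    μ₁^3 + μ₂^3 + μ₃^3 + μ₄^3 ≤
      (1 / Real.sqrt 3) * (μ₁^2 + μ₂^2 + μ₃^2 + μ₄^2) ^ ((3 : ℝ)/2) := by
  have hsqrt : √(4 * (4 - 1)) = 2 * √3 := by
    rw [show (4 : ℝ) * (4 - 1) = 2 ^ 2 * 3 by norm_num, Real.sqrt_mul (sq_nonneg 2),
      Real.sqrt_sq zero_le_two]
  have hconst : (4 - 2) / √(4 * (4 - 1)) = 1 / √3 := by
    rw [hsqrt]
    field_simp
    norm_num
  rw [← hconst]
  simpa [Fin.sum_univ_four] using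
    stmt_2_general (s := univ) (x := ![μ₁, μ₂, μ₃, μ₄]) univ_nontrivial
      (by simpa [Fin.sum_univ_four] using hsum)
end

section
/- Let μ₁, μ₂, μ₃, μ₄ be real numbers with μ₁ + μ₂ + μ₃ + μ₄ = 0, μ₁ > 0, and μ₂ < 0, μ₃ < 0, μ₄ < 0. Let r₁₂, r₁₃, r₁₄, r₂₃, r₂₄, r₃₄ be real numbers, each lying in the interval [0,1]. Then (μ₁² + μ₂² − 2(μ₃² + μ₄²))·r₁₂ + (μ₁² + μ₃² − 2(μ₂² + μ₄²))·r₁₃ + (μ₁² + μ₄² − 2(μ₂² + μ₃²))·r₁₄ + (μ₂² + μ₃² − 2(μ₁² + μ₄²))·r₂₃ + (μ₂² + μ₄² − 2(μ₁² + μ₃²))·r₂₄ + (μ₃² + μ₄² − 2(μ₁² + μ₂²))·r₃₄ ≤ (3/2)·(μ₁² + μ₂² + μ₃² + μ₄²). -/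
/-!
Put `x i = μ i ^ 2` and `S = ∑ i, x i`, where `i` runs over `n ≥ 2` indices; the coefficient of
`r i j` is `3 * (x i + x j) - 2 * S`. If `x i` is maximal, the coefficients of the pairs avoiding
`i` are nonpositive, so only the star of pairs through `i` matters. Its terms are
`(p + 3 * x j) * r i j` with `p = 3 * x i - 2 * S`, and their sum is at most `S` if `p ≤ 0`, and at
most its value at `r = 1` if `0 ≤ p`. In the latter case Cauchy–Schwarz applied to
`μ i = -∑ j ≠ i, μ j` bounds `x i`. The resulting constant is `(n ^ 2 - 4 * n + 6) / n`, which is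
`3 / 2` for `n = 4`.
-/

open Finset

section FinsetSums

variable {ι R : Type*} [CommRing R] [LinearOrder R] [IsOrderedRing R]
  {s : Finset ι} {y t : ι → R} {p : R}

lemma sum_mul_le_sum_of_mem_Icc (hy : ∀ j ∈ s, 0 ≤ y j) (ht : ∀ j ∈ s, t j ∈ Set.Icc 0 1) :
    ∑ j ∈ s, y j * t j ≤ ∑ j ∈ s, y j :=
  sum_le_sum fun j hj => mul_le_of_le_one_right (hy j hj) (ht j hj).2

lemma sum_const_add_mul_le_of_nonneg (hp : 0 ≤ p) (hy : ∀ j ∈ s, 0 ≤ y j)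
    (ht : ∀ j ∈ s, t j ∈ Set.Icc 0 1) :
    ∑ j ∈ s, (p + y j) * t j ≤ #s * p + ∑ j ∈ s, y j := by
  calc ∑ j ∈ s, (p + y j) * t j
      ≤ ∑ j ∈ s, (p + y j) :=
        sum_mul_le_sum_of_mem_Icc (fun j hj => add_nonneg hp (hy j hj)) ht
    _ = #s * p + ∑ j ∈ s, y j := by rw [sum_add_distrib, sum_const, nsmul_eq_mul]

lemma sum_const_add_mul_le_of_nonpos (hp : p ≤ 0) (hpy : 0 ≤ p + ∑ j ∈ s, y j)
    (hy : ∀ j ∈ s, 0 ≤ y j) (ht : ∀ j ∈ s, t j ∈ Set.Icc 0 1) :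
    ∑ j ∈ s, (p + y j) * t j ≤ p + ∑ j ∈ s, y j := by
  have hsplit : ∑ j ∈ s, (p + y j) * t j = p * ∑ j ∈ s, t j + ∑ j ∈ s, y j * t j := by
    simp only [add_mul, sum_add_distrib, mul_sum]
  rw [hsplit]
  rcases le_total 1 (∑ j ∈ s, t j) with hT | hT
  · exact add_le_add (mul_le_of_one_le_right hp hT) (sum_mul_le_sum_of_mem_Icc hy ht)
  · have hyt : ∑ j ∈ s, y j * t j ≤ (∑ j ∈ s, y j) * ∑ j ∈ s, t j := by
      rw [sum_mul]
      exact sum_le_sum fun j hj => mul_le_mul_of_nonneg_left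
        (single_le_sum (fun k hk => (ht k hk).1) hj) (hy j hj)
    calc p * ∑ j ∈ s, t j + ∑ j ∈ s, y j * t j
        ≤ (p + ∑ j ∈ s, y j) * ∑ j ∈ s, t j := by rw [add_mul]; gcongr
      _ ≤ p + ∑ j ∈ s, y j := mul_le_of_le_one_right hpy hT

end FinsetSums

section OrderedRing

variable {ι R : Type*} [Fintype ι] [CommRing R] [LinearOrder R] [IsStrictOrderedRing R]
  {x : ι → R} {i : ι}

lemma natCast_sub_two_mul_sub_three_nonneg (n : ℕ) : (0 : R) ≤ (n - 2) * (n - 3) := by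
  rcases Nat.lt_or_ge 2 n with hn | hn
  · have h3 : (3 : R) ≤ n := mod_cast hn
    exact mul_nonneg (by linarith) (by linarith)
  · have h2 : (n : R) ≤ 2 := mod_cast hn
    exact mul_nonneg_of_nonpos_of_nonpos (by linarith) (by linarith)

lemma card_mul_sq_le_of_sum_eq_zero {μ : ι → R} (hμ : ∑ j, μ j = 0) (i : ι) :
    Fintype.card ι * μ i ^ 2 ≤ (Fintype.card ι - 1) * ∑ j, μ j ^ 2 := by
  classical
  have hi : μ i = -∑ j ∈ univ.erase i, μ j := by
    rw [← add_sum_erase _ _ (mem_univ i)] at hμ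
    exact eq_neg_of_add_eq_zero_left hμ
  have hcard : (#(univ.erase i) : R) = Fintype.card ι - 1 := by
    rw [cast_card_erase_of_mem (mem_univ i), card_univ]
  have hcs : μ i ^ 2 ≤ (Fintype.card ι - 1) * ∑ j ∈ univ.erase i, μ j ^ 2 := by
    rw [hi, neg_sq, ← hcard]
    exact sq_sum_le_card_mul_sum_sq
  rw [← add_sum_erase _ _ (mem_univ i)]
  linear_combination hcs

lemma three_mul_add_le_two_mul_sum_of_max (hx : ∀ j, 0 ≤ x j) (hi : ∀ j, x j ≤ x i)
    {j k : ι} (hji : j ≠ i) (hki : k ≠ i) (hjk : j ≠ k) :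
    3 * (x j + x k) ≤ 2 * ∑ l, x l := by
  classical
  have hsub : x i + (x j + x k) ≤ ∑ l, x l := by
    rw [← sum_pair hjk, ← sum_insert (by simp [hji.symm, hki.symm])]
    exact sum_le_univ_sum_of_nonneg hx
  linarith [hi j, hi k]

variable [DecidableEq ι]

lemma sum_sum_erase_le_of_nonpos {f : ι → ι → R}
    (hf : ∀ j k, j ≠ i → k ≠ i → j ≠ k → f j k ≤ 0) :
    ∑ j, ∑ k ∈ univ.erase j, f j k
      ≤ ∑ k ∈ univ.erase i, f i k + ∑ j ∈ univ.erase i, f j i := by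
  rw [← add_sum_erase _ _ (mem_univ i)]
  gcongr with j hj
  have hji : j ≠ i := ne_of_mem_erase hj
  rw [← add_sum_erase _ _ (mem_erase.2 ⟨hji.symm, mem_univ i⟩)]
  refine add_le_of_nonpos_right (sum_nonpos fun k hk => ?_)
  simp only [mem_erase, mem_univ, and_true] at hk
  exact hf j k hji hk.1 hk.2.symm

lemma card_mul_sum_star_le [Nontrivial ι] (hx : ∀ j, 0 ≤ x j)
    (hi : Fintype.card ι * x i ≤ (Fintype.card ι - 1) * ∑ j, x j)
    {t : ι → R} (ht : ∀ j, t j ∈ Set.Icc 0 1) :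
    Fintype.card ι * ∑ j ∈ univ.erase i, (3 * (x i + x j) - 2 * ∑ k, x k) * t j
      ≤ (Fintype.card ι ^ 2 - 4 * Fintype.card ι + 6) * ∑ j, x j := by
  have hcard : (#(univ.erase i) : R) = Fintype.card ι - 1 := by
    rw [cast_card_erase_of_mem (mem_univ i), card_univ]
  have hrest : ∑ j ∈ univ.erase i, 3 * x j = 3 * (∑ j, x j - x i) := by
    rw [← mul_sum, sum_erase_eq_sub (mem_univ i)]
  have hn : (0 : R) ≤ Fintype.card ι - 2 := sub_nonneg.2 (mod_cast Fintype.one_lt_card)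
  set n := Fintype.card ι
  set S := ∑ j, x j
  have hS : 0 ≤ S := sum_nonneg fun j _ => hx j
  have hy : ∀ j ∈ univ.erase i, 0 ≤ 3 * x j := fun j _ => mul_nonneg zero_le_three (hx j)
  have hsplit : ∀ j, 3 * (x i + x j) - 2 * S = (3 * x i - 2 * S) + 3 * x j := fun j => by ring
  simp only [hsplit]
  rcases le_total 0 (3 * x i - 2 * S) with hp | hp
  · have hstar := sum_const_add_mul_le_of_nonneg hp hy fun j _ => ht j
    rw [hcard, hrest] at hstar
    linear_combination (n : R) * hstar + 3 * (n - 2 : R) * hi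
  · have hstar := sum_const_add_mul_le_of_nonpos hp (by rw [hrest]; linarith) hy fun j _ => ht j
    rw [hrest] at hstar
    linear_combination (n : R) * hstar + S * natCast_sub_two_mul_sub_three_nonneg (R := R) n

-- Ordered pairs are summed, so every pair `{i, j}` counts twice: hence the factor `2`.
theorem card_mul_sum_pairs_le [Nontrivial ι] (hx : ∀ i, 0 ≤ x i)
    (hxS : ∀ i, Fintype.card ι * x i ≤ (Fintype.card ι - 1) * ∑ j, x j)
    {r : ι → ι → R} (hr : ∀ i j, r i j ∈ Set.Icc 0 1) :
    Fintype.card ι * ∑ i, ∑ j ∈ univ.erase i, (3 * (x i + x j) - 2 * ∑ k, x k) * r i j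
      ≤ 2 * ((Fintype.card ι ^ 2 - 4 * Fintype.card ι + 6) * ∑ i, x i) := by
  obtain ⟨i, hmax⟩ := Finite.exists_max x
  have hreduce := sum_sum_erase_le_of_nonpos (i := i)
    (f := fun j k => (3 * (x j + x k) - 2 * ∑ l, x l) * r j k) fun j k hji hki hjk =>
      mul_nonpos_of_nonpos_of_nonneg
        (sub_nonpos.2 (three_mul_add_le_two_mul_sum_of_max hx hmax hji hki hjk)) (hr j k).1
  have hrow := card_mul_sum_star_le hx (hxS i) (hr i)
  have hcol := card_mul_sum_star_le hx (hxS i) fun j => hr j i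
  simp only [add_comm (x i)] at hcol
  linear_combination (Fintype.card ι : R) * hreduce + hrow + hcol

theorem card_mul_sum_pairs_sq_le_of_sum_eq_zero [Nontrivial ι] {μ : ι → R} (hμ : ∑ i, μ i = 0)
    {r : ι → ι → R} (hr : ∀ i j, r i j ∈ Set.Icc 0 1) :
    Fintype.card ι * ∑ i, ∑ j ∈ univ.erase i,
        (3 * (μ i ^ 2 + μ j ^ 2) - 2 * ∑ k, μ k ^ 2) * r i j
      ≤ 2 * ((Fintype.card ι ^ 2 - 4 * Fintype.card ι + 6) * ∑ i, μ i ^ 2) :=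
  card_mul_sum_pairs_le (fun i => sq_nonneg (μ i)) (card_mul_sq_le_of_sum_eq_zero hμ) hr

end OrderedRing

theorem stmt_4_general {K : Type*} [Field K] [LinearOrder K] [IsStrictOrderedRing K]
    (μ₁ μ₂ μ₃ μ₄ : K) (hsum : μ₁ + μ₂ + μ₃ + μ₄ = 0)
    (r₁₂ r₁₃ r₁₄ r₂₃ r₂₄ r₃₄ : K)
    (hr12 : r₁₂ ∈ Set.Icc (0 : K) 1) (hr13 : r₁₃ ∈ Set.Icc (0 : K) 1)
    (hr14 : r₁₄ ∈ Set.Icc (0 : K) 1) (hr23 : r₂₃ ∈ Set.Icc (0 : K) 1)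
    (hr24 : r₂₄ ∈ Set.Icc (0 : K) 1) (hr34 : r₃₄ ∈ Set.Icc (0 : K) 1) :
    (μ₁^2 + μ₂^2 - 2 * (μ₃^2 + μ₄^2)) * r₁₂
    + (μ₁^2 + μ₃^2 - 2 * (μ₂^2 + μ₄^2)) * r₁₃
    + (μ₁^2 + μ₄^2 - 2 * (μ₂^2 + μ₃^2)) * r₁₄
    + (μ₂^2 + μ₃^2 - 2 * (μ₁^2 + μ₄^2)) * r₂₃
    + (μ₂^2 + μ₄^2 - 2 * (μ₁^2 + μ₃^2)) * r₂₄
    + (μ₃^2 + μ₄^2 - 2 * (μ₁^2 + μ₂^2)) * r₃₄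
    ≤ (3/2) * (μ₁^2 + μ₂^2 + μ₃^2 + μ₄^2) := by
  let μ : Fin 4 → K := ![μ₁, μ₂, μ₃, μ₄]
  let r : Fin 4 → Fin 4 → K :=
    ![![0, r₁₂, r₁₃, r₁₄], ![r₁₂, 0, r₂₃, r₂₄], ![r₁₃, r₂₃, 0, r₃₄], ![r₁₄, r₂₄, r₃₄, 0]]
  have hμ : ∑ i, μ i = 0 := by simpa [μ, Fin.sum_univ_four] using hsum
  have hr : ∀ i j, r i j ∈ Set.Icc 0 1 := by
    have hr0 : (0 : K) ∈ Set.Icc 0 1 := Set.left_mem_Icc.2 zero_le_one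
    simp [-Set.mem_Icc, r, Fin.forall_fin_succ, hr0, hr12, hr13, hr14, hr23, hr24, hr34]
  have hpairs := card_mul_sum_pairs_sq_le_of_sum_eq_zero hμ hr
  simp only [μ, r, Fintype.card_fin, Nat.cast_ofNat, mem_univ, sum_erase_eq_sub, Fin.sum_univ_four,
    Matrix.cons_val] at hpairs
  linear_combination hpairs / 8

theorem stmt_4 (μ₁ μ₂ μ₃ μ₄ : ℝ) (hsum : μ₁ + μ₂ + μ₃ + μ₄ = 0)
    (h1 : μ₁ > 0) (h2 : μ₂ < 0) (h3 : μ₃ < 0) (h4 : μ₄ < 0)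
    (r₁₂ r₁₃ r₁₄ r₂₃ r₂₄ r₃₄ : ℝ)
    (hr12 : r₁₂ ∈ Set.Icc (0:ℝ) 1) (hr13 : r₁₃ ∈ Set.Icc (0:ℝ) 1)
    (hr14 : r₁₄ ∈ Set.Icc (0:ℝ) 1) (hr23 : r₂₃ ∈ Set.Icc (0:ℝ) 1)
    (hr24 : r₂₄ ∈ Set.Icc (0:ℝ) 1) (hr34 : r₃₄ ∈ Set.Icc (0:ℝ) 1) :
    (μ₁^2 + μ₂^2 - 2 * (μ₃^2 + μ₄^2)) * r₁₂
    + (μ₁^2 + μ₃^2 - 2 * (μ₂^2 + μ₄^2)) * r₁₃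
    + (μ₁^2 + μ₄^2 - 2 * (μ₂^2 + μ₃^2)) * r₁₄
    + (μ₂^2 + μ₃^2 - 2 * (μ₁^2 + μ₄^2)) * r₂₃
    + (μ₂^2 + μ₄^2 - 2 * (μ₁^2 + μ₃^2)) * r₂₄
    + (μ₃^2 + μ₄^2 - 2 * (μ₁^2 + μ₂^2)) * r₃₄
    ≤ (3/2) * (μ₁^2 + μ₂^2 + μ₃^2 + μ₄^2) :=
  stmt_4_general μ₁ μ₂ μ₃ μ₄ hsum r₁₂ r₁₃ r₁₄ r₂₃ r₂₄ r₃₄ hr12 hr13 hr14 hr23 hr24 hr34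
end

section
/- Let n ≥ 4 be an integer and let μ : Fin n → ℝ satisfy ∑_{i} μ_i = 0. Then the following are equivalent: (1) for all i ≠ j, (μ_i + μ_j)² + (n − 4)·μ_i·μ_j = (∑_k μ_k²)/(n − 1); (2) there exist a real number μ and an index i₀ such that μ_{i₀} = −(n − 1)·μ and μ_i = μ for every i ≠ i₀. -/
/-!
For fixed `b`, the second difference of `q(x, y) = (x + y)² + b x y` is
`q(x, y) - q(x, z) - q(w, y) + q(w, z) = (b + 2) (x - w) (y - z)`. If `q(μ i, μ j)` does not depend
on `i ≠ j`, then `(μ i - μ l) (μ j - μ k) = 0` whenever `i, l ∉ {j, k}`. As soon as there are four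
indices, this leaves room for at most one exceptional value, and the trace condition determines it.
-/

section Combinatorics

variable {ι α : Type*} [Fintype ι]

theorem exists_forall_ne_eq_of_eq_or_eq (hι : 4 ≤ Fintype.card ι) {f : ι → α}
    (h : ∀ i j k l, i ≠ j → i ≠ k → l ≠ j → l ≠ k → f i = f l ∨ f j = f k) :
    ∃ a i₀, ∀ i, i ≠ i₀ → f i = a := by
  classical
  by_cases hconst : ∀ j k, f j = f k
  · obtain ⟨i₀⟩ : Nonempty ι := Fintype.card_pos_iff.1 (by lia)
    exact ⟨f i₀, i₀, fun i _ ↦ hconst i i₀⟩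
  push Not at hconst
  obtain ⟨j, k, hjk⟩ := hconst
  obtain ⟨i, hi, l, hl, hil⟩ : ∃ i ∈ ({j, k} : Finset ι)ᶜ, ∃ l ∈ ({j, k} : Finset ι)ᶜ, i ≠ l := by
    rw [← Finset.one_lt_card, Finset.card_compl, Finset.card_pair (ne_of_apply_ne f hjk)]
    lia
  simp only [Finset.mem_compl, Finset.mem_insert, Finset.mem_singleton, not_or] at hi hl
  have hother (x : ι) (hxj : x ≠ j) (hxk : x ≠ k) : f x = f i :=
    (h x j k i hxj hxk hi.1 hi.2).resolve_right hjk
  obtain hji | hji := eq_or_ne (f j) (f i)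
  · refine ⟨f i, k, fun x hxk ↦ ?_⟩
    obtain rfl | hxj := eq_or_ne x j
    exacts [hji, hother x hxj hxk]
  · have hkl : f k = f l :=
      (h k j i l (ne_of_apply_ne f hjk.symm) (Ne.symm hi.2) hl.1 hil.symm).resolve_right hji
    refine ⟨f i, j, fun x hxj ↦ ?_⟩
    obtain rfl | hxk := eq_or_ne x k
    exacts [hkl.trans (hother l hl.1 hl.2), hother x hxj hxk]

end Combinatorics

section OffDiagonal

variable {ι R : Type*} [CommRing R] {x : ι → R}

theorem eq_or_eq_of_offDiag_sq_add_mul_eq [NoZeroDivisors R] {b c : R} (hb : b + 2 ≠ 0)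
    (h : ∀ i j, i ≠ j → (x i + x j) ^ 2 + b * (x i * x j) = c)
    {i j k l : ι} (hij : i ≠ j) (hik : i ≠ k) (hlj : l ≠ j) (hlk : l ≠ k) :
    x i = x l ∨ x j = x k := by
  have hprod : (b + 2) * ((x i - x l) * (x j - x k)) = 0 := by
    linear_combination h i j hij - h i k hik - h l j hlj + h l k hlk
  simpa only [mul_eq_zero, hb, false_or, sub_eq_zero] using hprod

theorem exists_forall_ne_eq_of_offDiag_sq_add_mul_eq [NoZeroDivisors R] [Fintype ι]
    (hι : 4 ≤ Fintype.card ι) {b c : R} (hb : b + 2 ≠ 0)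
    (h : ∀ i j, i ≠ j → (x i + x j) ^ 2 + b * (x i * x j) = c) :
    ∃ m i₀, ∀ i, i ≠ i₀ → x i = m :=
  exists_forall_ne_eq_of_eq_or_eq hι fun _ _ _ _ ↦ eq_or_eq_of_offDiag_sq_add_mul_eq hb h

theorem offDiag_sq_add_mul_eq_of_forall_ne_eq {r m : R} {i₀ : ι} (hi₀ : x i₀ = -(r - 1) * m)
    (hm : ∀ i, i ≠ i₀ → x i = m) {i j : ι} (hij : i ≠ j) :
    (x i + x j) ^ 2 + (r - 4) * (x i * x j) = r * m ^ 2 := by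
  obtain rfl | hi := eq_or_ne i i₀
  · rw [hi₀, hm j hij.symm]
    ring
  obtain rfl | hj := eq_or_ne j i₀
  · rw [hi₀, hm i hij]
    ring
  · rw [hm i hi, hm j hj]
    ring

end OffDiagonal

section Sum

variable {ι R : Type*} [Fintype ι]

theorem sum_eq_add_card_sub_one_mul_of_forall_ne_eq [NonAssocRing R] {f : ι → R} {a : R} {i₀ : ι}
    (h : ∀ i, i ≠ i₀ → f i = a) : ∑ i, f i = f i₀ + ((Fintype.card ι : R) - 1) * a := by
  have hdiff : ∑ i, (f i - a) = f i₀ - a :=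
    Fintype.sum_eq_single i₀ fun i hi ↦ sub_eq_zero.2 (h i hi)
  rw [Finset.sum_sub_distrib, Finset.sum_const, Finset.card_univ, nsmul_eq_mul,
    sub_eq_iff_eq_add] at hdiff
  rw [hdiff, sub_mul, one_mul]
  abel

theorem sum_sq_eq_of_forall_ne_eq [CommRing R] {x : ι → R} {m : R} {i₀ : ι}
    (hi₀ : x i₀ = -((Fintype.card ι : R) - 1) * m) (hm : ∀ i, i ≠ i₀ → x i = m) :
    ∑ i, x i ^ 2 = (Fintype.card ι : R) * m ^ 2 * ((Fintype.card ι : R) - 1) := by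
  have hsq (i : ι) (hi : i ≠ i₀) : x i ^ 2 = m ^ 2 := by rw [hm i hi]
  rw [sum_eq_add_card_sub_one_mul_of_forall_ne_eq hsq, hi₀]
  ring

end Sum

theorem stmt_13_general {ι K : Type*} [Fintype ι] [Field K] (hι : 4 ≤ Fintype.card ι)
    (h₁ : (Fintype.card ι : K) ≠ 1) (h₂ : (Fintype.card ι : K) ≠ 2) (μ : ι → K)
    (hsum : ∑ i, μ i = 0) :
    (∀ i j, i ≠ j → (μ i + μ j) ^ 2 + ((Fintype.card ι : K) - 4) * (μ i * μ j) =
        (∑ k, μ k ^ 2) / ((Fintype.card ι : K) - 1)) ↔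
      ∃ m i₀, μ i₀ = -((Fintype.card ι : K) - 1) * m ∧ ∀ i, i ≠ i₀ → μ i = m := by
  constructor
  · intro h
    have hb : (Fintype.card ι : K) - 4 + 2 ≠ 0 := by
      convert sub_ne_zero.2 h₂ using 1
      ring
    obtain ⟨m, i₀, hm⟩ := exists_forall_ne_eq_of_offDiag_sq_add_mul_eq hι hb h
    refine ⟨m, i₀, ?_, hm⟩
    linear_combination hsum - sum_eq_add_card_sub_one_mul_of_forall_ne_eq hm
  · rintro ⟨m, i₀, hi₀, hm⟩ i j hij
    rw [offDiag_sq_add_mul_eq_of_forall_ne_eq hi₀ hm hij, sum_sq_eq_of_forall_ne_eq hi₀ hm,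
      mul_div_cancel_right₀ _ (sub_ne_zero.2 h₁)]

theorem stmt_13 (n : ℕ) (hn : 4 ≤ n) (μ : Fin n → ℝ)
    (hsum : ∑ i, μ i = 0) :
    (∀ i j : Fin n, i ≠ j →
        (μ i + μ j)^2 + ((n : ℝ) - 4) * (μ i * μ j) = (∑ k, (μ k)^2) / ((n : ℝ) - 1))
    ↔ (∃ (m : ℝ) (i₀ : Fin n), μ i₀ = -((n : ℝ) - 1) * m ∧ ∀ i : Fin n, i ≠ i₀ → μ i = m) := by
  have hcard : Fintype.card (Fin n) = n := Fintype.card_fin n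
  simpa only [hcard] using stmt_13_general (by lia) (by norm_cast; lia) (by norm_cast; lia) μ hsum
end

section
/- Let R : Fin 4 → Fin 4 → Fin 4 → Fin 4 → ℝ satisfy the curvature symmetries R_{ijkl} = −R_{jikl} = −R_{ijlk} = R_{klij} for all i, j, k, l. Define Ric_{ij} = ∑_k R_{ikjk}, S = ∑_i Ric_{ii}, and W_{ijkl} = R_{ijkl} − (1/2)(Ric_{ik}δ_{jl} − Ric_{il}δ_{jk} + Ric_{jl}δ_{ik} − Ric_{jk}δ_{il}) + (S/6)(δ_{ik}δ_{jl} − δ_{il}δ_{jk}), where δ is the Kronecker delta. Then for every enumeration i, j, k, l of the four distinct indices of Fin 4, one has S/6 = R_{ijij} + R_{klkl} − 2·W_{ijij}. -/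
/-- Kronecker delta on `Fin 4`. -/
def kdelta (i j : Fin 4) : ℝ := if i = j then 1 else 0

/-- Ricci contraction of a curvature array. -/
def ricci (R : Fin 4 → Fin 4 → Fin 4 → Fin 4 → ℝ) (i j : Fin 4) : ℝ :=
  ∑ k, R i k j k

/-- Scalar curvature of a curvature array. -/
def scal (R : Fin 4 → Fin 4 → Fin 4 → Fin 4 → ℝ) : ℝ :=
  ∑ i, ricci R i i

/-- Weyl tensor of a curvature array on a 4-dimensional space
(orthonormal frame, metric = Kronecker delta). -/
noncomputable def weyl (R : Fin 4 → Fin 4 → Fin 4 → Fin 4 → ℝ) (i j k l : Fin 4) : ℝ :=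
  R i j k l
    - (1/2) * (ricci R i k * kdelta j l - ricci R i l * kdelta j k
        + ricci R j l * kdelta i k - ricci R j k * kdelta i l)
    + (scal R / 6) * (kdelta i k * kdelta j l - kdelta i l * kdelta j k)

/-!
Put `K x y = R x y x y`. Summing `K` over all ordered pairs gives the scalar curvature `S`, and
summing it over a row gives a diagonal Ricci entry. Cutting the square of indices along `{i, j}` and
its complement `{k, l}`, the two mixed blocks agree because `K` is symmetric, so
`S = 2 (Ric i i + Ric j j) - 2 K i j + 2 K k l`. On the other hand
`W i j i j = K i j - (Ric i i + Ric j j) / 2 + S / 6`, and eliminating `Ric i i + Ric j j` gives the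
identity.
-/

open Finset

section FiniteSums

variable {ι M : Type*} [DecidableEq ι] [AddCommMonoid M] {K : ι → ι → M}

theorem sum_sum_add_block_eq_two_nsmul_rows_add_compl_block [Fintype ι]
    (hsymm : ∀ x y, K x y = K y x) (s : Finset ι) :
    ∑ x, ∑ y, K x y + ∑ x ∈ s, ∑ y ∈ s, K x y =
      2 • ∑ x ∈ s, ∑ y, K x y + ∑ x ∈ sᶜ, ∑ y ∈ sᶜ, K x y := by
  have split_rows (t : Finset ι) :
      ∑ x ∈ t, ∑ y, K x y = ∑ x ∈ t, ∑ y ∈ s, K x y + ∑ x ∈ t, ∑ y ∈ sᶜ, K x y := by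
    simp only [← sum_add_distrib, sum_add_sum_compl]
  have mixed_blocks : ∑ x ∈ sᶜ, ∑ y ∈ s, K x y = ∑ x ∈ s, ∑ y ∈ sᶜ, K x y := by
    rw [sum_comm]
    exact sum_congr rfl fun x _ ↦ sum_congr rfl fun y _ ↦ hsymm y x
  rw [← sum_add_sum_compl s, split_rows s, split_rows sᶜ, mixed_blocks]
  abel

theorem sum_sum_pair_of_symm_of_diag_eq_zero (hsymm : ∀ x y, K x y = K y x)
    (hdiag : ∀ x, K x x = 0) {a b : ι} (hab : a ≠ b) :
    ∑ x ∈ {a, b}, ∑ y ∈ {a, b}, K x y = 2 • K a b := by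
  simp only [sum_pair hab, hdiag, hsymm b a, zero_add, add_zero, two_nsmul]

end FiniteSums

theorem compl_pair_eq_pair_of_card_eq_four {ι : Type*} [Fintype ι] [DecidableEq ι]
    (hcard : Fintype.card ι = 4) {i j k l : ι} (hij : i ≠ j) (hik : i ≠ k) (hil : i ≠ l)
    (hjk : j ≠ k) (hjl : j ≠ l) (hkl : k ≠ l) : ({i, j} : Finset ι)ᶜ = {k, l} := by
  symm
  apply eq_of_subset_of_card_le
  · simp [insert_subset_iff, hik.symm, hil.symm, hjk.symm, hjl.symm]
  · rw [card_compl, hcard, card_pair hij, card_pair hkl]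

section Antisymmetry

variable {ι G : Type*} [AddGroup G] {R : ι → ι → ι → ι → G}

theorem apply_swap_swap_of_antisymm (hanti1 : ∀ i j k l, R i j k l = -R j i k l)
    (hanti2 : ∀ i j k l, R i j k l = -R i j l k) (i j k l : ι) :
    R i j k l = R j i l k := by
  rw [hanti1, hanti2, neg_neg]

theorem apply_self_left_eq_zero_of_antisymm [IsAddTorsionFree G]
    (hanti1 : ∀ i j k l, R i j k l = -R j i k l) (i k l : ι) : R i i k l = 0 :=
  self_eq_neg.mp (hanti1 i i k l)

end Antisymmetry

theorem kdelta_self (i : Fin 4) : kdelta i i = 1 := if_pos rfl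

theorem kdelta_of_ne {i j : Fin 4} (hij : i ≠ j) : kdelta i j = 0 := if_neg hij

section Curvature

variable {R : Fin 4 → Fin 4 → Fin 4 → Fin 4 → ℝ}

theorem weyl_apply_self_pair {i j : Fin 4} (hij : i ≠ j) :
    weyl R i j i j = R i j i j - (ricci R i i + ricci R j j) / 2 + scal R / 6 := by
  rw [weyl, kdelta_self, kdelta_self, kdelta_of_ne hij, kdelta_of_ne hij.symm]
  ring

theorem scal_eq_two_mul_ricci_add_ricci_sub_add (hanti1 : ∀ i j k l, R i j k l = -R j i k l)
    (hanti2 : ∀ i j k l, R i j k l = -R i j l k) {i j k l : Fin 4}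
    (hij : i ≠ j) (hik : i ≠ k) (hil : i ≠ l) (hjk : j ≠ k) (hjl : j ≠ l) (hkl : k ≠ l) :
    scal R = 2 * (ricci R i i + ricci R j j) - 2 * R i j i j + 2 * R k l k l := by
  have hsymm (x y) : R x y x y = R y x y x := apply_swap_swap_of_antisymm hanti1 hanti2 x y x y
  have hdiag (x) : R x x x x = 0 := apply_self_left_eq_zero_of_antisymm hanti1 x x x
  have hcut := sum_sum_add_block_eq_two_nsmul_rows_add_compl_block hsymm {i, j}
  rw [compl_pair_eq_pair_of_card_eq_four (Fintype.card_fin 4) hij hik hil hjk hjl hkl,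
    sum_sum_pair_of_symm_of_diag_eq_zero hsymm hdiag hij,
    sum_sum_pair_of_symm_of_diag_eq_zero hsymm hdiag hkl, sum_pair hij] at hcut
  simp only [scal, ricci]
  linear_combination hcut

end Curvature

theorem stmt_15_general (R : Fin 4 → Fin 4 → Fin 4 → Fin 4 → ℝ)
    (hanti1 : ∀ i j k l, R i j k l = -R j i k l)
    (hanti2 : ∀ i j k l, R i j k l = -R i j l k)
    (i j k l : Fin 4)
    (hij : i ≠ j) (hik : i ≠ k) (hil : i ≠ l)
    (hjk : j ≠ k) (hjl : j ≠ l) (hkl : k ≠ l) :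
    scal R / 6 = R i j i j + R k l k l - 2 * weyl R i j i j := by
  have hscal := scal_eq_two_mul_ricci_add_ricci_sub_add hanti1 hanti2 hij hik hil hjk hjl hkl
  rw [weyl_apply_self_pair hij]
  linear_combination hscal / 2

theorem stmt_15 (R : Fin 4 → Fin 4 → Fin 4 → Fin 4 → ℝ)
    (hanti1 : ∀ i j k l, R i j k l = -R j i k l)
    (hanti2 : ∀ i j k l, R i j k l = -R i j l k)
    (hpair : ∀ i j k l, R i j k l = R k l i j)
    (i j k l : Fin 4)
    (hij : i ≠ j) (hik : i ≠ k) (hil : i ≠ l)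
    (hjk : j ≠ k) (hjl : j ≠ l) (hkl : k ≠ l) :
    scal R / 6 = R i j i j + R k l k l - 2 * weyl R i j i j :=
  stmt_15_general R hanti1 hanti2 i j k l hij hik hil hjk hjl hkl
end

section
/- Let R̄ : Fin 4 → Fin 4 → Fin 4 → Fin 4 → ℝ satisfy the curvature symmetries R̄_{ijkl} = −R̄_{jikl} = −R̄_{ijlk} = R̄_{klij} and the first Bianchi identity R̄_{ijkl} + R̄_{jkil} + R̄_{kijl} = 0, and suppose 0 ≤ R̄_{ijij} ≤ 1 for all i ≠ j. Let λ₁, λ₂, λ₃, λ₄ be real numbers and set H = (λ₁ + λ₂ + λ₃ + λ₄)/4. Define R_{ijkl} = R̄_{ijkl} + λ_i·λ_j·(δ_{ik}δ_{jl} − δ_{il}δ_{jk}), Ric_{ij} = ∑_k R_{ikjk}, S = ∑_i Ric_{ii}, |Ric|² = ∑_{i,j} Ric_{ij}², and W_{ijkl} = R_{ijkl} − (1/2)(Ric_{ik}δ_{jl} − Ric_{il}δ_{jk} + Ric_{jl}δ_{ik} − Ric_{jk}δ_{il}) + (S/6)(δ_{ik}δ_{jl} − δ_{il}δ_{jk}).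 For t ≥ 0 set x₀(t) = 3√3·t + √(3 + 21t²) and x₁(t) = √(12 + 24t²), and define f(t) = (1/3)·((√3/3)·x₁(t)³ − (t/2)·x₁(t)²) if x₀(t) ≤ x₁(t), and f(t) = (1/3)·((√3/3)·x₀(t)³ − (t/2)·x₀(t)²) otherwise. If W_{ijkl} = 0 for all i, j, k, l, then S²/12 − |Ric|²/4 ≤ 3·(1 + H²)² + 3·|H|·f(|H|). -/
/-- The curvature of the hypersurface obtained from the ambient curvature `Rbar`
and the principal curvatures `lam` via the Gauss equation. -/
def gaussCurv (Rbar : Fin 4 → Fin 4 → Fin 4 → Fin 4 → ℝ) (lam : Fin 4 → ℝ)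
    (i j k l : Fin 4) : ℝ :=
  Rbar i j k l + lam i * lam j * (kdelta i k * kdelta j l - kdelta i l * kdelta j k)

/-- Squared norm of the Ricci tensor. -/
def ricciNormSq (R : Fin 4 → Fin 4 → Fin 4 → Fin 4 → ℝ) : ℝ :=
  ∑ i, ∑ j, (ricci R i j)^2

/-- The point `x₀(t) = 3√3 t + √(3 + 21 t²)` where `F` attains its maximum. -/
noncomputable def xzero (t : ℝ) : ℝ := 3 * Real.sqrt 3 * t + Real.sqrt (3 + 21 * t^2)

/-- The threshold `x₁(t) = √(12 + 24 t²)`. -/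
noncomputable def xone (t : ℝ) : ℝ := Real.sqrt (12 + 24 * t^2)

/-- The correction function `f` from the paper. -/
noncomputable def fcorr (t : ℝ) : ℝ :=
  if xzero t ≤ xone t then
    (1/3) * ((Real.sqrt 3 / 3) * (xone t)^3 - (t/2) * (xone t)^2)
  else
    (1/3) * ((Real.sqrt 3 / 3) * (xzero t)^3 - (t/2) * (xzero t)^2)

/-! Write `X = |Å|²`. The Gauss equation gives `S = S̄ + 12 H² - X` with `0 ≤ S̄ ≤ 12`, so for
`X ≤ 12 + 24 H²` the bound `S²/12 - |Ric|²/4 ≤ S²/48` already yields `3 (1 + H²)²`.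

For larger `X`, vanishing of the Weyl components `W_{ijij}` makes `K_{ij} + K_{kl} = S/6` on each
splitting of the frame into two pairs, and the integrand is at most
`K₀₁ K₂₃ + K₀₂ K₁₃ + K₀₃ K₁₂`. Let `u, v, w` be half the differences between the sums of the
principal curvatures over the two pairs. Then `X = u² + v² + w²`, and since the ambient curvatures
lie in `[0, 1]`, the squares `u², v², w²` differ pairwise by at most `2`. This controls `det A`
up to its term `H u v w`, which AM-GM bounds by `X^{3/2}`. The resulting excess over `3 (1 + H²)²`
is at most `F(√X)` for a quartic `F` that increases on `[|H|, x₀(|H|)]` and decreases afterwards. -/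

section ElementaryInequalities

theorem mul_add_mul_le_of_mem_Icc {a b c d m : ℝ} (ha : a ∈ Set.Icc 0 1) (hb : b ∈ Set.Icc 0 1)
    (hm : 0 ≤ m) (hc : c ≤ m) (hd : d ≤ m) (hcd : c + d ≤ m) : a * c + b * d ≤ m := by
  have hbd : b * d ≤ max d 0 := by
    rcases le_total 0 d with h | h
    · exact (mul_le_of_le_one_left h hb.2).trans (le_max_left _ _)
    · exact (mul_nonpos_of_nonneg_of_nonpos hb.1 h).trans (le_max_right _ _)
  have hac : a * c ≤ max c 0 := by
    rcases le_total 0 c with h | h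
    · exact (mul_le_of_le_one_left h ha.2).trans (le_max_left _ _)
    · exact (mul_nonpos_of_nonneg_of_nonpos ha.1 h).trans (le_max_right _ _)
  have hmax : max c 0 + max d 0 ≤ m := by
    rcases max_cases c 0 with hc' | hc' <;> rcases max_cases d 0 with hd' | hd' <;> linarith
  linarith

theorem mul_mul_mul_le_add_add_pow_three {a b c : ℝ} (ha : 0 ≤ a) (hb : 0 ≤ b) (hc : 0 ≤ c) :
    27 * (a * b * c) ≤ (a + b + c) ^ 3 := by
  nlinarith [mul_nonneg ha (sq_nonneg (b - c)), mul_nonneg hb (sq_nonneg (a - c)),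
    mul_nonneg hc (sq_nonneg (a - b)), mul_nonneg (add_nonneg (add_nonneg ha hb) hc)
      (add_nonneg (add_nonneg (sq_nonneg (a - b)) (sq_nonneg (a - c))) (sq_nonneg (b - c)))]

theorem three_mul_abs_mul_mul_le (u v w : ℝ) :
    3 * |u * v * w| ≤ √3 / 3 * √(u ^ 2 + v ^ 2 + w ^ 2) ^ 3 := by
  have h3 : √3 ^ 2 = 3 := Real.sq_sqrt (by norm_num)
  have hx : √(u ^ 2 + v ^ 2 + w ^ 2) ^ 2 = u ^ 2 + v ^ 2 + w ^ 2 := Real.sq_sqrt (by positivity)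
  have hamgm := mul_mul_mul_le_add_add_pow_three (sq_nonneg u) (sq_nonneg v) (sq_nonneg w)
  rw [← hx] at hamgm
  refine le_of_sq_le_sq ?_ (by positivity)
  rw [mul_pow, sq_abs]
  linear_combination hamgm / 3 - √(u ^ 2 + v ^ 2 + w ^ 2) ^ 6 / 9 * h3

end ElementaryInequalities

section Splittings

open Finset

/-- The mean curvature `H`, normalised as the average of the principal curvatures. -/
noncomputable def meanCurv (lam : Fin 4 → ℝ) : ℝ := (∑ i, lam i) / 4

/-- The squared norm `|Å|²` of the traceless second fundamental form. -/
noncomputable def tracelessNormSq (lam : Fin 4 → ℝ) : ℝ := ∑ i, (lam i - meanCurv lam) ^ 2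

/-- Half the difference of the sums of the principal curvatures over `{i, j}` and `{k, l}`.
The values on the three splittings of the index set into pairs are orthonormal coordinates
of the traceless second fundamental form. -/
noncomputable def splitDiff (lam : Fin 4 → ℝ) (i j k l : Fin 4) : ℝ :=
  (lam i + lam j - lam k - lam l) / 2

@[to_additive]
theorem prod_univ_eq_of_nodup {M : Type*} [CommMonoid M] {i j k l : Fin 4}
    (h : [i, j, k, l].Nodup) (f : Fin 4 → M) : ∏ m, f m = f i * (f j * (f k * f l)) := by
  have huniv : [i, j, k, l].toFinset = univ :=
    eq_univ_of_card _ (List.toFinset_card_of_nodup h)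
  rw [← huniv, List.prod_toFinset f h]
  simp only [List.map_cons, List.map_nil, List.prod_cons, List.prod_nil, mul_one]

theorem ne_and_ne_of_nodup {i j k l : Fin 4} (h : [i, j, k, l].Nodup) : i ≠ j ∧ k ≠ l := by
  grind

variable (lam : Fin 4 → ℝ)

theorem sum_eq_four_mul_meanCurv : ∑ i, lam i = 4 * meanCurv lam := by
  unfold meanCurv; ring

theorem sum_sq_eq_tracelessNormSq_add :
    ∑ i, lam i ^ 2 = tracelessNormSq lam + 4 * meanCurv lam ^ 2 := by
  simp only [tracelessNormSq, meanCurv, Fin.sum_univ_four]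
  ring

theorem tracelessNormSq_eq_sum_splitDiff_sq {i j k l : Fin 4} (h : [i, j, k, l].Nodup) :
    tracelessNormSq lam =
      splitDiff lam i j k l ^ 2 + splitDiff lam i k j l ^ 2 + splitDiff lam i l j k ^ 2 := by
  simp only [tracelessNormSq, meanCurv, splitDiff, sum_univ_eq_of_nodup h]
  ring

theorem mul_add_mul_eq_of_nodup {i j k l : Fin 4} (h : [i, j, k, l].Nodup) :
    lam i * lam j + lam k * lam l =
      2 * meanCurv lam ^ 2 + splitDiff lam i j k l ^ 2 - tracelessNormSq lam / 2 := by
  simp only [tracelessNormSq, meanCurv, splitDiff, sum_univ_eq_of_nodup h]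
  ring

theorem mul_le_meanCurv_add_half_splitDiff_sq {i j k l : Fin 4} (h : [i, j, k, l].Nodup) :
    lam i * lam j ≤ (meanCurv lam + splitDiff lam i j k l / 2) ^ 2 := by
  have hmid : meanCurv lam + splitDiff lam i j k l / 2 = (lam i + lam j) / 2 := by
    simp only [meanCurv, splitDiff, sum_univ_eq_of_nodup h]
    ring
  rw [hmid]
  linarith [sq_nonneg (lam i - lam j)]

variable {lam}

theorem mul_mul_add_mul_mul_le_of_nodup {i j k l : Fin 4} (h : [i, j, k, l].Nodup) {a b : ℝ}
    (ha : a ∈ Set.Icc 0 1) (hb : b ∈ Set.Icc 0 1)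
    (hsplit : 3 * splitDiff lam i j k l ^ 2 ≤ 2 * tracelessNormSq lam) :
    a * (lam k * lam l) + b * (lam i * lam j) ≤
      2 * meanCurv lam ^ 2 + (meanCurv lam * splitDiff lam i j k l) ^ 2
        + splitDiff lam i j k l ^ 2 / 4 + 1 / 4 := by
  have hsum := mul_add_mul_eq_of_nodup lam h
  have hij := mul_le_meanCurv_add_half_splitDiff_sq lam h
  have hkl := mul_le_meanCurv_add_half_splitDiff_sq lam
    (show [k, l, i, j].Nodup from (List.perm_append_comm (l₁ := [i, j])).nodup h)
  have hneg : splitDiff lam k l i j = -splitDiff lam i j k l := by unfold splitDiff; ring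
  rw [hneg] at hkl
  set H := meanCurv lam
  set u := splitDiff lam i j k l
  refine mul_add_mul_le_of_mem_Icc ha hb (by positivity) ?_ ?_ ?_
  · linarith [sq_nonneg H, sq_nonneg (H * u + 1 / 2)]
  · linarith [sq_nonneg H, sq_nonneg (H * u - 1 / 2)]
  · linarith [sq_nonneg (H * u)]

theorem three_mul_prod_eq_splitDiff :
    3 * ∏ i, lam i =
      3 * meanCurv lam ^ 4 - 3 / 2 * meanCurv lam ^ 2 * tracelessNormSq lam
        + 3 * meanCurv lam *
          (splitDiff lam 0 1 2 3 * splitDiff lam 0 2 1 3 * splitDiff lam 0 3 1 2)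
        - tracelessNormSq lam ^ 2 / 16
        + ((splitDiff lam 0 1 2 3 ^ 2 - splitDiff lam 0 2 1 3 ^ 2) ^ 2
          + (splitDiff lam 0 1 2 3 ^ 2 - splitDiff lam 0 3 1 2 ^ 2) ^ 2
          + (splitDiff lam 0 2 1 3 ^ 2 - splitDiff lam 0 3 1 2 ^ 2) ^ 2) / 8 := by
  rw [tracelessNormSq_eq_sum_splitDiff_sq lam (by decide : [(0 : Fin 4), 1, 2, 3].Nodup)]
  simp only [meanCurv, splitDiff, Fin.sum_univ_four, Fin.prod_univ_four]
  ring

end Splittings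

section CurvatureArrays

variable {R : Fin 4 → Fin 4 → Fin 4 → Fin 4 → ℝ}

/-- The Gauss–Bonnet–Chern integrand `S²/12 - |Ric|²/4` of a curvature array without Weyl part. -/
noncomputable def chernIntegrand (R : Fin 4 → Fin 4 → Fin 4 → Fin 4 → ℝ) : ℝ :=
  scal R ^ 2 / 12 - ricciNormSq R / 4

theorem sum_ricci_diag_sq_le_ricciNormSq (R : Fin 4 → Fin 4 → Fin 4 → Fin 4 → ℝ) :
    ∑ i, ricci R i i ^ 2 ≤ ricciNormSq R :=
  Finset.sum_le_sum fun i _ ↦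
    Finset.single_le_sum (f := fun j ↦ ricci R i j ^ 2) (fun _ _ ↦ sq_nonneg _) (Finset.mem_univ i)

theorem chernIntegrand_le_scal_sq (R : Fin 4 → Fin 4 → Fin 4 → Fin 4 → ℝ) :
    chernIntegrand R ≤ scal R ^ 2 / 48 := by
  have hcauchy : scal R ^ 2 ≤ 4 * ∑ i, ricci R i i ^ 2 := by
    simpa [scal] using sq_sum_le_card_mul_sum_sq (s := Finset.univ) (f := fun i ↦ ricci R i i)
  unfold chernIntegrand
  linarith [sum_ricci_diag_sq_le_ricciNormSq R]

theorem diag_eq_zero_of_weyl_eq_zero {i : Fin 4} (hW : weyl R i i i i = 0) : R i i i i = 0 := by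
  unfold weyl at hW
  linarith

theorem sectional_eq_of_weyl_eq_zero {i j : Fin 4} (hij : i ≠ j) (hW : weyl R i j i j = 0) :
    R i j i j = (ricci R i i + ricci R j j) / 2 - scal R / 6 := by
  simp only [weyl, kdelta, if_true, if_neg hij, if_neg hij.symm] at hW
  linarith

theorem sectional_add_sectional_of_weyl_eq_zero (hW : ∀ i j, weyl R i j i j = 0)
    {i j k l : Fin 4} (h : [i, j, k, l].Nodup) :
    R i j i j + R k l k l = scal R / 6 := by
  obtain ⟨hij, hkl⟩ := ne_and_ne_of_nodup h
  have hscal : scal R = _ := sum_univ_eq_of_nodup h fun m ↦ ricci R m m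
  rw [sectional_eq_of_weyl_eq_zero hij (hW i j), sectional_eq_of_weyl_eq_zero hkl (hW k l)]
  linarith

theorem chernIntegrand_le_sum_mul_sectional (hW : ∀ i j, weyl R i j i j = 0) :
    chernIntegrand R ≤
      R 0 1 0 1 * R 2 3 2 3 + R 0 2 0 2 * R 1 3 1 3 + R 0 3 0 3 * R 1 2 1 2 := by
  have hK : ∀ {i j}, i ≠ j → R i j i j = (ricci R i i + ricci R j j) / 2 - scal R / 6 :=
    fun hij ↦ sectional_eq_of_weyl_eq_zero hij (hW _ _)
  have hdiag := sum_ricci_diag_sq_le_ricciNormSq R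
  have hscal : scal R = _ := Fin.sum_univ_four fun i ↦ ricci R i i
  rw [Fin.sum_univ_four] at hdiag
  rw [chernIntegrand, hK (by decide : (0 : Fin 4) ≠ 1), hK (by decide : (2 : Fin 4) ≠ 3),
    hK (by decide : (0 : Fin 4) ≠ 2), hK (by decide : (1 : Fin 4) ≠ 3),
    hK (by decide : (0 : Fin 4) ≠ 3), hK (by decide : (1 : Fin 4) ≠ 2), hscal]
  linarith

end CurvatureArrays

section GaussEquation

variable {Rbar : Fin 4 → Fin 4 → Fin 4 → Fin 4 → ℝ} {lam : Fin 4 → ℝ}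

theorem gaussCurv_sectional {i j : Fin 4} (hij : i ≠ j) :
    gaussCurv Rbar lam i j i j = Rbar i j i j + lam i * lam j := by
  simp [gaussCurv, kdelta, hij]

theorem gaussCurv_diag (i : Fin 4) : gaussCurv Rbar lam i i i i = Rbar i i i i := by
  simp [gaussCurv]

theorem scal_gaussCurv :
    scal (gaussCurv Rbar lam) = scal Rbar + 12 * meanCurv lam ^ 2 - tracelessNormSq lam := by
  have hscal : scal (gaussCurv Rbar lam) = scal Rbar + (∑ i, lam i) ^ 2 - ∑ i, lam i ^ 2 := by
    simp only [scal, ricci, gaussCurv, kdelta, ↓reduceIte, mul_one, mul_ite, mul_zero,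
      Fin.sum_univ_four, sub_self, add_zero, one_ne_zero, sub_zero, Fin.reduceEq, zero_ne_one]
    ring
  rw [hscal, sum_eq_four_mul_meanCurv, sum_sq_eq_tracelessNormSq_add]
  ring

theorem scal_mem_Icc_of_sectional_mem_Icc (hdiag : ∀ i, Rbar i i i i = 0)
    (hsec : ∀ i j, i ≠ j → Rbar i j i j ∈ Set.Icc 0 1) : scal Rbar ∈ Set.Icc 0 12 := by
  have hterm : ∀ i j, 0 ≤ Rbar i j i j ∧ Rbar i j i j ≤ if i = j then 0 else 1 := by
    intro i j
    split_ifs with hij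
    · subst hij
      simp [hdiag]
    · exact hsec i j hij
  refine ⟨Finset.sum_nonneg fun i _ ↦ Finset.sum_nonneg fun j _ ↦ (hterm i j).1, ?_⟩
  have sum_off_diagonal (i : Fin 4) : ∑ j, (if i = j then (0 : ℝ) else 1) = 3 := by
    simp [Finset.sum_ite, Finset.filter_ne, Finset.card_erase_of_mem]
  calc scal Rbar ≤ ∑ i : Fin 4, ∑ j : Fin 4, (if i = j then (0 : ℝ) else 1) :=
        Finset.sum_le_sum fun i _ ↦ Finset.sum_le_sum fun j _ ↦ (hterm i j).2
    _ = 12 := by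
        rw [Finset.sum_congr rfl fun i _ ↦ sum_off_diagonal i]
        norm_num

theorem chernIntegrand_le_of_tracelessNormSq_le (hdiag : ∀ i, Rbar i i i i = 0)
    (hsec : ∀ i j, i ≠ j → Rbar i j i j ∈ Set.Icc 0 1)
    (hX : tracelessNormSq lam ≤ 12 + 24 * meanCurv lam ^ 2) :
    chernIntegrand (gaussCurv Rbar lam) ≤ 3 * (1 + meanCurv lam ^ 2) ^ 2 := by
  have hbar := scal_mem_Icc_of_sectional_mem_Icc hdiag hsec
  have hX0 : 0 ≤ tracelessNormSq lam := Finset.sum_nonneg fun _ _ ↦ sq_nonneg _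
  have hscal : scal (gaussCurv Rbar lam) ^ 2 ≤ (12 * (1 + meanCurv lam ^ 2)) ^ 2 := by
    rw [scal_gaussCurv]
    apply sq_le_sq' <;> linarith [hbar.1, hbar.2]
  linarith [chernIntegrand_le_scal_sq (gaussCurv Rbar lam)]

theorem sectional_add_add_splitDiff_sq (hW : ∀ i j, weyl (gaussCurv Rbar lam) i j i j = 0)
    {i j k l : Fin 4} (h : [i, j, k, l].Nodup) :
    Rbar i j i j + Rbar k l k l + splitDiff lam i j k l ^ 2 =
      scal Rbar / 6 + tracelessNormSq lam / 3 := by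
  obtain ⟨hij, hkl⟩ := ne_and_ne_of_nodup h
  have hsplit := sectional_add_sectional_of_weyl_eq_zero hW h
  rw [gaussCurv_sectional hij, gaussCurv_sectional hkl, scal_gaussCurv] at hsplit
  linarith [mul_add_mul_eq_of_nodup lam h]

end GaussEquation

section Profile

open Set

/-- The paper's function `F`: for `|Å| = x ≥ x₁(|H|)`, the integrand exceeds `3 (1 + H²)²` by at
most `F` at `t = |H|`. -/
noncomputable def chernProfile (t x : ℝ) : ℝ :=
  -x ^ 4 / 24 + t * (√3 / 3 * x ^ 3) - t ^ 2 * x ^ 2 / 2 + x ^ 2 / 4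

/-- The critical point of the profile conjugate to `xzero t`. -/
noncomputable def xzeroConj (t : ℝ) : ℝ := 3 * √3 * t - √(3 + 21 * t ^ 2)

theorem hasDerivAt_chernProfile (t x : ℝ) :
    HasDerivAt (chernProfile t)
      (-(x / 6) * ((x - xzero t) * (x - xzeroConj t))) x := by
  have hpoly : HasDerivAt (chernProfile t) _ x :=
    (((((hasDerivAt_pow 4 x).neg.div_const 24).add
      (((hasDerivAt_pow 3 x).const_mul (√3 / 3)).const_mul t)).sub
      (((hasDerivAt_pow 2 x).const_mul (t ^ 2)).div_const 2)).add
      ((hasDerivAt_pow 2 x).div_const 4))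
  refine hpoly.congr_deriv ?_
  have h3 : √3 ^ 2 = 3 := Real.sq_sqrt (by norm_num)
  have hdisc : √(3 + 21 * t ^ 2) ^ 2 = 3 + 21 * t ^ 2 := Real.sq_sqrt (by positivity)
  simp only [xzero, xzeroConj, Nat.cast_ofNat]
  linear_combination (3 / 2 * x * t ^ 2) * h3 - (x / 6) * hdisc

theorem continuous_chernProfile (t : ℝ) : Continuous (chernProfile t) :=
  continuous_iff_continuousAt.2 fun x ↦ (hasDerivAt_chernProfile t x).continuousAt

theorem xzeroConj_le {t : ℝ} (ht : 0 ≤ t) : xzeroConj t ≤ t := by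
  have h3 : √3 ≤ 7 / 4 := Real.sqrt_le_left (by norm_num) |>.2 (by norm_num)
  have hdisc : 9 / 2 * t ≤ √(3 + 21 * t ^ 2) := Real.le_sqrt_of_sq_le (by nlinarith)
  unfold xzeroConj
  nlinarith

theorem le_xzero {t : ℝ} (ht : 0 ≤ t) : t ≤ xzero t := by
  have h3 : 1 ≤ √3 := Real.one_le_sqrt.2 (by norm_num)
  unfold xzero
  nlinarith [Real.sqrt_nonneg (3 + 21 * t ^ 2)]

theorem monotoneOn_chernProfile {t : ℝ} (ht : 0 ≤ t) :
    MonotoneOn (chernProfile t) (Icc t (xzero t)) := by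
  refine monotoneOn_of_hasDerivWithinAt_nonneg (convex_Icc _ _)
    (continuous_chernProfile t).continuousOn
    (fun x _ ↦ (hasDerivAt_chernProfile t x).hasDerivWithinAt) fun x hx ↦ ?_
  obtain ⟨htx, hx0⟩ := interior_subset hx
  exact mul_nonneg_of_nonpos_of_nonpos (by linarith)
    (mul_nonpos_of_nonpos_of_nonneg (by linarith) (by linarith [xzeroConj_le ht]))

theorem antitoneOn_chernProfile {t : ℝ} (ht : 0 ≤ t) :
    AntitoneOn (chernProfile t) (Ici (xzero t)) := by
  refine antitoneOn_of_hasDerivWithinAt_nonpos (convex_Ici _)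
    (continuous_chernProfile t).continuousOn
    (fun x _ ↦ (hasDerivAt_chernProfile t x).hasDerivWithinAt) fun x hx ↦ ?_
  have hx0 : xzero t ≤ x := interior_subset hx
  have htx := (le_xzero ht).trans hx0
  exact mul_nonpos_of_nonpos_of_nonneg (by linarith)
    (mul_nonneg (by linarith) (by linarith [xzeroConj_le ht]))

theorem le_xone (t : ℝ) : t ≤ xone t :=
  Real.le_sqrt_of_sq_le (by linarith [sq_nonneg t])

theorem chernProfile_le_max {t x : ℝ} (ht : 0 ≤ t) (hx : xone t ≤ x) :
    chernProfile t x ≤ chernProfile t (max (xzero t) (xone t)) := by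
  rcases le_total x (xzero t) with hx0 | hx0
  · rw [max_eq_left (hx.trans hx0)]
    exact monotoneOn_chernProfile ht ⟨(le_xone t).trans hx, hx0⟩ ⟨le_xzero ht, le_rfl⟩ hx0
  · exact antitoneOn_chernProfile ht (mem_Ici.2 (le_max_left _ _)) hx0 (max_le hx0 hx)

theorem fcorr_eq_max (t : ℝ) :
    fcorr t = 1 / 3 * (√3 / 3 * max (xzero t) (xone t) ^ 3
      - t / 2 * max (xzero t) (xone t) ^ 2) := by
  rw [fcorr, max_def]
  split_ifs <;> rfl

theorem chernProfile_le_three_mul_fcorr {t x : ℝ} (ht : 0 ≤ t) (hx : xone t ≤ x) :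
    chernProfile t x ≤ 3 * t * fcorr t := by
  refine (chernProfile_le_max ht hx).trans ?_
  rw [fcorr_eq_max, chernProfile]
  have hmax : 12 ≤ max (xzero t) (xone t) ^ 2 := by
    have hxone : xone t ^ 2 = 12 + 24 * t ^ 2 := Real.sq_sqrt (by positivity)
    have hle := pow_le_pow_left₀ (ht.trans (le_xone t)) (le_max_right (xzero t) (xone t)) 2
    linarith [sq_nonneg t]
  set m := max (xzero t) (xone t)
  linarith [mul_nonneg (sq_nonneg m) (sub_nonneg.2 hmax), sq_nonneg m]

theorem fcorr_nonneg {t : ℝ} (ht : 0 ≤ t) : 0 ≤ fcorr t := by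
  have h3 : 3 / 2 ≤ √3 := Real.le_sqrt_of_sq_le (by norm_num)
  have hm : t ≤ max (xzero t) (xone t) := (le_xone t).trans (le_max_right _ _)
  rw [fcorr_eq_max]
  set m := max (xzero t) (xone t)
  have hlin : 0 ≤ √3 / 3 * m - t / 2 := by nlinarith
  linarith [mul_nonneg (sq_nonneg m) hlin]

end Profile

section LargeTracelessPart

variable {Rbar : Fin 4 → Fin 4 → Fin 4 → Fin 4 → ℝ} {lam : Fin 4 → ℝ}

theorem abs_splitDiff_sq_sub_le (hsec : ∀ i j, i ≠ j → Rbar i j i j ∈ Set.Icc 0 1)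
    (hW : ∀ i j, weyl (gaussCurv Rbar lam) i j i j = 0) {i j k l i' j' k' l' : Fin 4}
    (h : [i, j, k, l].Nodup) (h' : [i', j', k', l'].Nodup) :
    |splitDiff lam i j k l ^ 2 - splitDiff lam i' j' k' l' ^ 2| ≤ 2 := by
  have hpair : ∀ {i j k l}, [i, j, k, l].Nodup → Rbar i j i j + Rbar k l k l ∈ Set.Icc 0 2 := by
    intro i j k l h
    have hij := hsec i j (ne_and_ne_of_nodup h).1
    have hkl := hsec k l (ne_and_ne_of_nodup h).2
    constructor <;> linarith [hij.1, hij.2, hkl.1, hkl.2]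
  have hconst := sectional_add_add_splitDiff_sq hW h
  have hconst' := sectional_add_add_splitDiff_sq hW h'
  rw [abs_le]
  constructor <;> linarith [(hpair h).1, (hpair h).2, (hpair h').1, (hpair h').2]

theorem three_mul_splitDiff_sq_le (hsec : ∀ i j, i ≠ j → Rbar i j i j ∈ Set.Icc 0 1)
    (hW : ∀ i j, weyl (gaussCurv Rbar lam) i j i j = 0) {i j k l : Fin 4}
    (h : [i, j, k, l].Nodup) :
    3 * splitDiff lam i j k l ^ 2 ≤ tracelessNormSq lam + 4 := by
  have hik := abs_le.1 (abs_splitDiff_sq_sub_le hsec hW h (by grind : [i, k, j, l].Nodup))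
  have hil := abs_le.1 (abs_splitDiff_sq_sub_le hsec hW h (by grind : [i, l, j, k].Nodup))
  linarith [tracelessNormSq_eq_sum_splitDiff_sq lam h, hik.2, hil.2]

theorem mul_sectional_gaussCurv_le (hsec : ∀ i j, i ≠ j → Rbar i j i j ∈ Set.Icc 0 1)
    (hW : ∀ i j, weyl (gaussCurv Rbar lam) i j i j = 0) (hX : 4 ≤ tracelessNormSq lam)
    {i j k l : Fin 4} (h : [i, j, k, l].Nodup) :
    gaussCurv Rbar lam i j i j * gaussCurv Rbar lam k l k l ≤
      5 / 4 + 2 * meanCurv lam ^ 2 + (meanCurv lam * splitDiff lam i j k l) ^ 2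
        + splitDiff lam i j k l ^ 2 / 4 + ∏ m, lam m := by
  obtain ⟨hij, hkl⟩ := ne_and_ne_of_nodup h
  have hambient : Rbar i j i j * Rbar k l k l ≤ 1 :=
    mul_le_one₀ (hsec i j hij).2 (hsec k l hkl).1 (hsec k l hkl).2
  have hmixed := mul_mul_add_mul_mul_le_of_nodup h (hsec i j hij) (hsec k l hkl)
    (by linarith [three_mul_splitDiff_sq_le hsec hW h])
  rw [gaussCurv_sectional hij, gaussCurv_sectional hkl, prod_univ_eq_of_nodup h]
  linarith

theorem three_mul_prod_le (hsec : ∀ i j, i ≠ j → Rbar i j i j ∈ Set.Icc 0 1)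
    (hW : ∀ i j, weyl (gaussCurv Rbar lam) i j i j = 0) :
    3 * ∏ i, lam i ≤
      3 * meanCurv lam ^ 4 - 3 / 2 * meanCurv lam ^ 2 * tracelessNormSq lam
        + |meanCurv lam| * (√3 / 3 * √(tracelessNormSq lam) ^ 3)
        - tracelessNormSq lam ^ 2 / 16 + 3 / 2 := by
  have hsplit₁ : [(0 : Fin 4), 1, 2, 3].Nodup := by decide
  have hsplit₂ : [(0 : Fin 4), 2, 1, 3].Nodup := by decide
  have hsplit₃ : [(0 : Fin 4), 3, 1, 2].Nodup := by decide
  have hcubic : meanCurv lam * (3 *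
        (splitDiff lam 0 1 2 3 * splitDiff lam 0 2 1 3 * splitDiff lam 0 3 1 2)) ≤
      |meanCurv lam| * (√3 / 3 * √(tracelessNormSq lam) ^ 3) := by
    refine (le_abs_self _).trans ?_
    rw [abs_mul, abs_mul, abs_of_pos (three_pos : (0 : ℝ) < 3),
      tracelessNormSq_eq_sum_splitDiff_sq lam hsplit₁]
    exact mul_le_mul_of_nonneg_left (three_mul_abs_mul_mul_le _ _ _) (abs_nonneg _)
  have hdiff : ∀ {i j k l i' j' k' l'}, [i, j, k, l].Nodup → [i', j', k', l'].Nodup →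
      (splitDiff lam i j k l ^ 2 - splitDiff lam i' j' k' l' ^ 2) ^ 2 ≤ 2 ^ 2 :=
    fun h h' ↦ sq_le_sq.2 (by simpa using abs_splitDiff_sq_sub_le hsec hW h h')
  have hdiff₁₂ := hdiff hsplit₁ hsplit₂
  have hdiff₁₃ := hdiff hsplit₁ hsplit₃
  have hdiff₂₃ := hdiff hsplit₂ hsplit₃
  rw [three_mul_prod_eq_splitDiff]
  linarith

theorem chernIntegrand_le_add_chernProfile (hsec : ∀ i j, i ≠ j → Rbar i j i j ∈ Set.Icc 0 1)
    (hW : ∀ i j, weyl (gaussCurv Rbar lam) i j i j = 0) (hX : 12 ≤ tracelessNormSq lam) :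
    chernIntegrand (gaussCurv Rbar lam) ≤
      3 * (1 + meanCurv lam ^ 2) ^ 2 + chernProfile |meanCurv lam| √(tracelessNormSq lam) := by
  have hsplit₁ : [(0 : Fin 4), 1, 2, 3].Nodup := by decide
  have hsplit₂ : [(0 : Fin 4), 2, 1, 3].Nodup := by decide
  have hsplit₃ : [(0 : Fin 4), 3, 1, 2].Nodup := by decide
  have hpair := fun {i j k l} ↦
    mul_sectional_gaussCurv_le hsec hW (by linarith) (i := i) (j := j) (k := k) (l := l)
  have hpair₁ := hpair hsplit₁
  have hpair₂ := hpair hsplit₂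
  have hpair₃ := hpair hsplit₃
  have hprod := three_mul_prod_le hsec hW
  have hX2 : √(tracelessNormSq lam) ^ 2 = tracelessNormSq lam := Real.sq_sqrt (by linarith)
  have hX4 : √(tracelessNormSq lam) ^ 4 = tracelessNormSq lam ^ 2 := by
    rw [← congrArg (· ^ 2) hX2]
    ring
  have hslack : 12 ^ 2 ≤ tracelessNormSq lam ^ 2 := pow_le_pow_left₀ (by norm_num) hX 2
  have hQ := chernIntegrand_le_sum_mul_sectional hW
  have hnorm : meanCurv lam ^ 2 * tracelessNormSq lam = _ :=
    congrArg (meanCurv lam ^ 2 * ·) (tracelessNormSq_eq_sum_splitDiff_sq lam hsplit₁)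
  rw [chernProfile, hX2, hX4, sq_abs]
  linarith [tracelessNormSq_eq_sum_splitDiff_sq lam hsplit₁]

end LargeTracelessPart

theorem stmt_17_general (Rbar : Fin 4 → Fin 4 → Fin 4 → Fin 4 → ℝ) (lam : Fin 4 → ℝ) (H : ℝ)
    (hsec : ∀ i j, i ≠ j → 0 ≤ Rbar i j i j ∧ Rbar i j i j ≤ 1)
    (hH : H = (lam 0 + lam 1 + lam 2 + lam 3) / 4)
    (hweyl : ∀ i j, weyl (gaussCurv Rbar lam) i j i j = 0) :
    (scal (gaussCurv Rbar lam))^2 / 12 - ricciNormSq (gaussCurv Rbar lam) / 4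
      ≤ 3 * (1 + H^2)^2 + 3 * |H| * fcorr |H| := by
  change chernIntegrand (gaussCurv Rbar lam) ≤ _
  obtain rfl : H = meanCurv lam := by rw [hH, meanCurv, Fin.sum_univ_four]
  rcases le_total (tracelessNormSq lam) (12 + 24 * meanCurv lam ^ 2) with hX | hX
  · have hdiag : ∀ i, Rbar i i i i = 0 := fun i ↦
      (gaussCurv_diag i).symm.trans (diag_eq_zero_of_weyl_eq_zero (hweyl i i))
    have hf := mul_nonneg (abs_nonneg (meanCurv lam)) (fcorr_nonneg (abs_nonneg (meanCurv lam)))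
    linarith [chernIntegrand_le_of_tracelessNormSq_le hdiag hsec hX]
  · have hxone : xone |meanCurv lam| ≤ √(tracelessNormSq lam) :=
      Real.sqrt_le_sqrt (by rwa [sq_abs])
    have hX12 : 12 ≤ tracelessNormSq lam := by linarith [sq_nonneg (meanCurv lam)]
    linarith [chernIntegrand_le_add_chernProfile hsec hweyl hX12,
      chernProfile_le_three_mul_fcorr (abs_nonneg _) hxone]

theorem stmt_17 (Rbar : Fin 4 → Fin 4 → Fin 4 → Fin 4 → ℝ) (lam : Fin 4 → ℝ) (H : ℝ)
    (hanti1 : ∀ i j k l, Rbar i j k l = -Rbar j i k l)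
    (hanti2 : ∀ i j k l, Rbar i j k l = -Rbar i j l k)
    (hpair : ∀ i j k l, Rbar i j k l = Rbar k l i j)
    (hbianchi : ∀ i j k l, Rbar i j k l + Rbar j k i l + Rbar k i j l = 0)
    (hsec : ∀ i j, i ≠ j → 0 ≤ Rbar i j i j ∧ Rbar i j i j ≤ 1)
    (hH : H = (lam 0 + lam 1 + lam 2 + lam 3) / 4)
    (hweyl : ∀ i j k l, weyl (gaussCurv Rbar lam) i j k l = 0) :
    (scal (gaussCurv Rbar lam))^2 / 12 - ricciNormSq (gaussCurv Rbar lam) / 4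
      ≤ 3 * (1 + H^2)^2 + 3 * |H| * fcorr |H| := by
  exact stmt_17_general Rbar lam H hsec hH fun i j ↦ hweyl i j i j
end
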